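/- arXiv:1709.04608 — 2 statements merged into one kernel-verified Lean document; each statement's English description precedes it below -/
import Mathlib

section
/- Let C be a cycle graph on n ≥ 3 vertices and let L be a list assignment with |L(v)| ≥ 2 for every vertex v. If there exist two vertices u and w of C with L(u) ≠ L(w), then C is L-colorable. -/
/-!
If every list were contained in its predecessor's, going once around the cycle would make all
lists equal. So some vertex `i` has a successor `i + 1` with a color `x ∈ L (i + 1) \ L i`
(`exists_not_subset_succ`). Give `i + 1` the color `x` and color `i + 2, i + 3, …, i` greedily
in cyclic order, each vertex avoiding its predecessor's color; two colors per list suffice. The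
only edge not handled by the greedy choice joins `i` to `i + 1`, and there the color `x` is not
available at `i`.
-/

/-- `G` is colorable from the list assignment `L`. -/
def IsListColorable {V : Type*} (G : SimpleGraph V) (L : V → Finset ℕ) : Prop :=
  ∃ c : V → ℕ, (∀ v, c v ∈ L v) ∧ ∀ u v, G.Adj u v → c u ≠ c v

/-- `G` is `k`-choosable: colorable from every list assignment with lists of size `k`. -/
def IsChoosable {V : Type*} (G : SimpleGraph V) (k : ℕ) : Prop :=
  ∀ L : V → Finset ℕ, (∀ v, (L v).card = k) → IsListColorable G L

open scoped Fin.CommRing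

lemma exists_not_subset_succ (m : ℕ) (L : Fin (m + 1) → Finset ℕ)
    (h : ∃ u w, L u ≠ L w) : ∃ i, ¬ L (i + 1) ⊆ L i := by
  by_contra! hsub
  have step : ∀ (i : Fin (m + 1)) (k : ℕ), L (i + (k : Fin (m + 1))) ⊆ L i := by
    intro i k
    induction k with
    | zero => simp
    | succ k ih =>
      rw [Nat.cast_succ, ← add_assoc]
      exact (hsub _).trans ih
  have all : ∀ u w, L u ⊆ L w := by
    intro u w
    have := step w (u - w).val
    rwa [Fin.cast_val_eq_self, add_sub_cancel] at this
  obtain ⟨u, w, huw⟩ := h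
  exact huw ((all u w).antisymm (all w u))

theorem stmt_4 (n : ℕ) (hn : 3 ≤ n) (L : Fin n → Finset ℕ)
    (hL : ∀ v, 2 ≤ (L v).card)
    (h : ∃ u w : Fin n, L u ≠ L w) :
    IsListColorable (SimpleGraph.cycleGraph n) L := by
  obtain ⟨m, rfl⟩ : ∃ m, n = m + 1 := ⟨n - 1, by omega⟩
  obtain ⟨i, hi⟩ := exists_not_subset_succ m L h
  obtain ⟨x, hx, hxi⟩ := Finset.not_subset.mp hi
  have hex : ∀ (v : Fin (m + 1)) (a : ℕ), ∃ b ∈ L v, b ≠ a := fun v a =>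
    Finset.exists_mem_ne (hL v) a
  choose g hgL hgne using hex
  -- `f k` is the color of the vertex `k` steps after `i + 1`.
  let f : ℕ → ℕ := fun k =>
    Nat.rec x (fun k a => g (i + 1 + ((k + 1 : ℕ) : Fin (m + 1))) a) k
  have hfL : ∀ k : ℕ, f k ∈ L (i + 1 + (k : Fin (m + 1))) := by
    intro k
    cases k with
    | zero => simpa [f] using hx
    | succ k => exact hgL _ _
  have hfne : ∀ k, f (k + 1) ≠ f k := fun k => hgne _ _
  have hcL : ∀ v, f (v - (i + 1)).val ∈ L v := by
    intro v
    have := hfL (v - (i + 1)).val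
    rwa [Fin.cast_val_eq_self, add_sub_cancel] at this
  have hsucc : ∀ u : Fin (m + 1), f (u + 1 - (i + 1)).val ≠ f (u - (i + 1)).val := by
    intro u
    rw [add_sub_right_comm u 1 (i + 1), Fin.val_add_one]
    split_ifs with hlast
    · -- `u` is `m` steps after `i + 1`, hence `u = i`.
      have hu : u = i := by
        have h1 : u - (i + 1) + 1 = 0 := by rw [hlast]; simp
        rw [← sub_eq_zero, ← h1]; abel
      subst hu
      intro he
      exact hxi ((show x = _ from he) ▸ hcL u)
    · exact hfne _
  refine ⟨fun v => f (v - (i + 1)).val, hcL, ?_⟩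
  intro u v huv
  obtain ⟨k, rfl⟩ : ∃ k, m = k + 1 := ⟨m - 1, by omega⟩
  rw [SimpleGraph.cycleGraph_adj] at huv
  rcases huv with huv | huv
  · rw [sub_eq_iff_eq_add'.mp huv]
    exact hsucc v
  · rw [sub_eq_iff_eq_add'.mp huv]
    exact (hsucc u).symm
end

section
/- Let G be a finite simple graph that is not 4-choosable but such that every proper induced subgraph of G is 4-choosable. Then G contains no five vertices x1, x2, x3, x4, x5 inducing a wheel W_5 (i.e., x1 x2 x3 x4 is an induced 4-cycle of G and x5 is adjacent to all of x1, x2, x3, x4) such that x5 has degree exactly 4 in G, the two adjacent rim vertices x1 and x2 have degree exactly 5 in G, and the rim vertices x3 and x4 have degree exactly 4 in G. -/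
/-- A list larger than the set `{a, b, c}` of forbidden colours contains an allowed colour. The
forbidden colours may be repeated, in order to forbid fewer than three. -/
lemma exists_mem_avoiding (A : Finset ℕ) (a b c : ℕ)
    (h : ({a, b, c} : Finset ℕ).card < A.card) : ∃ x ∈ A, x ≠ a ∧ x ≠ b ∧ x ≠ c := by
  obtain ⟨x, hx, hx'⟩ := Finset.exists_mem_notMem_of_card_lt_card h
  exact ⟨x, hx, by simpa using hx'⟩

/-- The wheel with rim `x1 x2 x3 x4` is colourable from lists of sizes at least `2, 2, 3, 3` on the
rim and exactly `4` on the hub. -/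
lemma exists_wheel_coloring (L1 L2 L3 L4 L5 : Finset ℕ) (h1 : 2 ≤ L1.card) (h2 : 2 ≤ L2.card)
    (h3 : 3 ≤ L3.card) (h4 : 3 ≤ L4.card) (h5 : L5.card = 4) :
    ∃ a1 ∈ L1, ∃ a2 ∈ L2, ∃ a3 ∈ L3, ∃ a4 ∈ L4, ∃ a5 ∈ L5,
      a1 ≠ a2 ∧ a2 ≠ a3 ∧ a3 ≠ a4 ∧ a4 ≠ a1 ∧ a5 ≠ a1 ∧ a5 ≠ a2 ∧ a5 ≠ a3 ∧ a5 ≠ a4 := by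
  have avoid1 (A : Finset ℕ) (a : ℕ) (h : 2 ≤ A.card) : ∃ x ∈ A, x ≠ a := by
    obtain ⟨x, hx, hxa, -⟩ := exists_mem_avoiding A a a a (by simp; omega)
    exact ⟨x, hx, hxa⟩
  have avoid2 (A : Finset ℕ) (a b : ℕ) (h : 3 ≤ A.card) : ∃ x ∈ A, x ≠ a ∧ x ≠ b := by
    obtain ⟨x, hx, hxa, hxb, -⟩ := exists_mem_avoiding A a b b
      (by have := Finset.card_le_two (a := a) (b := b); simp; omega)
    exact ⟨x, hx, hxa, hxb⟩
  have avoid3 (a b c : ℕ) : ∃ x ∈ L5, x ≠ a ∧ x ≠ b ∧ x ≠ c :=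
    exists_mem_avoiding L5 a b c
      (by have := Finset.card_le_three (a := a) (b := b) (c := c); omega)
  by_cases hd : Disjoint L1 L3
  · have hc : L5.card < (L1 ∪ L3).card := by
      rw [Finset.card_union_of_disjoint hd]; omega
    obtain ⟨c, hc, hc5⟩ := Finset.exists_mem_notMem_of_card_lt_card hc
    rcases Finset.mem_union.1 hc with hc | hc
    · obtain ⟨a2, m2, n2⟩ := avoid1 L2 c h2
      obtain ⟨a3, m3, n3⟩ := avoid1 L3 a2 (by omega)
      obtain ⟨a4, m4, n4, n4'⟩ := avoid2 L4 c a3 h4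
      obtain ⟨a5, m5, n5⟩ := avoid3 a2 a3 a4
      refine ⟨c, hc, a2, m2, a3, m3, a4, m4, a5, m5, ?_⟩
      grind
    · obtain ⟨a2, m2, n2⟩ := avoid1 L2 c h2
      obtain ⟨a1, m1, n1⟩ := avoid1 L1 a2 h1
      obtain ⟨a4, m4, n4, n4'⟩ := avoid2 L4 c a1 h4
      obtain ⟨a5, m5, n5⟩ := avoid3 a1 a2 a4
      refine ⟨a1, m1, a2, m2, c, hc, a4, m4, a5, m5, ?_⟩
      grind
  · obtain ⟨c, hc1, hc3⟩ := Finset.not_disjoint_iff.1 hd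
    obtain ⟨a2, m2, n2⟩ := avoid1 L2 c h2
    obtain ⟨a4, m4, n4⟩ := avoid1 L4 c (by omega)
    obtain ⟨a5, m5, n5⟩ := avoid3 c a2 a4
    refine ⟨c, hc1, a2, m2, c, hc3, a4, m4, a5, m5, ?_⟩
    grind

open Classical in
/-- If the neighbours of `v` lying in `W` include all of `N`, then colouring the vertices outside
`W` rules out at most `deg v - |N|` colours at `v`. -/
lemma card_le_card_sdiff_image_add {V : Type*} [Fintype V] (G : SimpleGraph V)
    [DecidableRel G.Adj] (A : Finset ℕ) (c : V → ℕ) (W N : Finset V) (v : V) (hNW : N ⊆ W)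
    (hN : ∀ u ∈ N, G.Adj v u) :
    A.card + N.card ≤ (A \ (G.neighborFinset v \ W).image c).card + G.degree v := by
  have e1 := Finset.le_card_sdiff ((G.neighborFinset v \ W).image c) A
  have e2 := Finset.card_image_le (s := G.neighborFinset v \ W) (f := c)
  have e3 : (G.neighborFinset v \ W).card + N.card ≤ G.degree v := by
    rw [← G.card_neighborFinset_eq_degree,
      ← Finset.card_union_of_disjoint (Finset.sdiff_disjoint.mono_right hNW)]
    refine Finset.card_le_card (Finset.union_subset Finset.sdiff_subset fun u hu => ?_)
    simpa using hN u hu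
  omega

theorem stmt_9 {V : Type*} [Fintype V] (G : SimpleGraph V) [DecidableRel G.Adj]
    (hG : ¬ IsChoosable G 4)
    (hmin : ∀ S : Set V, S ≠ Set.univ → IsChoosable (G.induce S) 4) :
    ¬ ∃ x1 x2 x3 x4 x5 : V,
        List.Pairwise (· ≠ ·) [x1, x2, x3, x4, x5] ∧
        G.Adj x1 x2 ∧ G.Adj x2 x3 ∧ G.Adj x3 x4 ∧ G.Adj x4 x1 ∧
        ¬ G.Adj x1 x3 ∧ ¬ G.Adj x2 x4 ∧
        G.Adj x5 x1 ∧ G.Adj x5 x2 ∧ G.Adj x5 x3 ∧ G.Adj x5 x4 ∧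
        G.degree x5 = 4 ∧ G.degree x1 = 5 ∧ G.degree x2 = 5 ∧
        G.degree x3 = 4 ∧ G.degree x4 = 4 := by
  classical
  rintro ⟨x1, x2, x3, x4, x5, hne, h12, h23, h34, h41, h13, h24, h51, h52, h53, h54,
    d5, d1, d2, d3, d4⟩
  apply hG
  intro L hL
  simp only [List.pairwise_cons, List.mem_cons, List.not_mem_nil, or_false, forall_eq_or_imp,
    forall_eq] at hne
  obtain ⟨⟨n12, n13, n14, n15⟩, ⟨n23, n24, n25⟩, ⟨n34, n35⟩, n45, -⟩ := hne
  set W : Finset V := {x1, x2, x3, x4, x5} with hW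
  obtain ⟨c', hc'L, hc'⟩ := hmin {v | v ∉ W}
    (fun h => by simpa [hW] using (Set.ext_iff.1 h x1)) (fun v => L v) (fun v => hL v)
  -- The value `0` on `W` is irrelevant.
  let c : V → ℕ := fun v => if h : v ∉ W then c' ⟨v, h⟩ else 0
  have hcL : ∀ v, v ∉ W → c v ∈ L v := fun v hv => by
    simpa [c, hv] using hc'L ⟨v, hv⟩
  have hc : ∀ u v, u ∉ W → v ∉ W → G.Adj u v → c u ≠ c v := fun u v hu hv huv => by
    simpa [c, hu, hv] using hc' ⟨u, hu⟩ ⟨v, hv⟩ huv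
  let R : V → Finset ℕ := fun v => L v \ (G.neighborFinset v \ W).image c
  have hRL : ∀ v, ∀ a ∈ R v, a ∈ L v := fun v a ha => (Finset.mem_sdiff.1 ha).1
  have hRc : ∀ v, ∀ a ∈ R v, ∀ u, u ∉ W → G.Adj v u → a ≠ c u := by
    rintro v a ha u hu huv rfl
    exact (Finset.mem_sdiff.1 ha).2 (Finset.mem_image_of_mem c (by simp [hu, huv]))
  have key := fun v N => card_le_card_sdiff_image_add G (L v) c W N v
  have r1 : 2 ≤ (R x1).card := by
    have := key x1 {x2, x4, x5} (by simp [hW, Finset.insert_subset_iff])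
      (by simp [h12, h41.symm, h51.symm])
    rw [Finset.card_eq_three.2 ⟨x2, x4, x5, n24, n25, n45, rfl⟩, hL, d1] at this
    change _ ≤ (R x1).card + _ at this
    omega
  have r2 : 2 ≤ (R x2).card := by
    have := key x2 {x1, x3, x5} (by simp [hW, Finset.insert_subset_iff])
      (by simp [h12.symm, h23, h52.symm])
    rw [Finset.card_eq_three.2 ⟨x1, x3, x5, n13, n15, n35, rfl⟩, hL, d2] at this
    change _ ≤ (R x2).card + _ at this
    omega
  have r3 : 3 ≤ (R x3).card := by
    have := key x3 {x2, x4, x5} (by simp [hW, Finset.insert_subset_iff])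
      (by simp [h23.symm, h34, h53.symm])
    rw [Finset.card_eq_three.2 ⟨x2, x4, x5, n24, n25, n45, rfl⟩, hL, d3] at this
    change _ ≤ (R x3).card + _ at this
    omega
  have r4 : 3 ≤ (R x4).card := by
    have := key x4 {x1, x3, x5} (by simp [hW, Finset.insert_subset_iff])
      (by simp [h41, h34.symm, h54.symm])
    rw [Finset.card_eq_three.2 ⟨x1, x3, x5, n13, n15, n35, rfl⟩, hL, d4] at this
    change _ ≤ (R x4).card + _ at this
    omega
  have r5 : (R x5).card = 4 := by
    have := key x5 {x1, x2, x3, x4} (by simp [hW, Finset.insert_subset_iff])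
      (by simp [h51, h52, h53, h54])
    have hcard : ({x1, x2, x3, x4} : Finset V).card = 4 := by
      simp [n12, n13, n14, n23, n24, n34]
    rw [hcard, hL, d5] at this
    change _ ≤ (R x5).card + _ at this
    have hle : (R x5).card ≤ (L x5).card := Finset.card_le_card Finset.sdiff_subset
    rw [hL] at hle
    omega
  obtain ⟨a1, m1, a2, m2, a3, m3, a4, m4, a5, m5, e12, e23, e34, e41, e51, e52, e53, e54⟩ :=
    exists_wheel_coloring (R x1) (R x2) (R x3) (R x4) (R x5) r1 r2 r3 r4 r5
  let f : V → ℕ := fun v => if v = x1 then a1 else if v = x2 then a2 else if v = x3 then a3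
    else if v = x4 then a4 else if v = x5 then a5 else c v
  have f1 : f x1 = a1 := by simp [f]
  have f2 : f x2 = a2 := by simp [f, n12.symm]
  have f3 : f x3 = a3 := by simp [f, n13.symm, n23.symm]
  have f4 : f x4 = a4 := by simp [f, n14.symm, n24.symm, n34.symm]
  have f5 : f x5 = a5 := by simp [f, n15.symm, n25.symm, n35.symm, n45.symm]
  have fW : ∀ v, v ∉ W → f v = c v := fun v hv => by
    simp only [hW, Finset.mem_insert, Finset.mem_singleton, not_or] at hv
    simp [f, hv]
  have memW : ∀ v, v ∈ W ↔ v = x1 ∨ v = x2 ∨ v = x3 ∨ v = x4 ∨ v = x5 := fun v => by simp [hW]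
  have hfR : ∀ v ∈ W, f v ∈ R v := fun v hv => by
    rcases (memW v).1 hv with rfl | rfl | rfl | rfl | rfl
    · rwa [f1]
    · rwa [f2]
    · rwa [f3]
    · rwa [f4]
    · rwa [f5]
  refine ⟨f, fun v => ?_, fun u v huv => ?_⟩
  · by_cases hv : v ∈ W
    · exact hRL v _ (hfR v hv)
    · rw [fW v hv]; exact hcL v hv
  · by_cases hu : u ∈ W <;> by_cases hv : v ∈ W
    · have h13' : ¬ G.Adj x3 x1 := fun h => h13 h.symm
      have h24' : ¬ G.Adj x4 x2 := fun h => h24 h.symm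
      rcases (memW u).1 hu with hu | hu | hu | hu | hu <;>
        rcases (memW v).1 hv with hv | hv | hv | hv | hv <;>
        rw [hu, hv] at huv ⊢ <;>
        first
        | exact absurd huv (G.irrefl)
        | contradiction
        | (simp only [f1, f2, f3, f4, f5]; first | assumption | (apply Ne.symm; assumption))
    · rw [fW v hv]
      exact hRc u _ (hfR u hu) v hv huv
    · rw [fW u hu]
      exact (hRc v _ (hfR v hv) u hu huv.symm).symm
    · rw [fW u hu, fW v hv]
      exact hc u v hu hv huv
end
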